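/- Let S be a skew lattice, let a, a', a'', a''' ∈ S be pairwise D-related, and let b ∈ S satisfy b∧a∧b = b (i.e., a ⪰ b in the natural preorder). Then (a∧b∧a')∧(a''∧b∧a''') = a∧b∧a'''. In particular, cosets of an upper D-class in a lower one are closed under ∧. -/

import Mathlib

/-!
For fixed `b`, the elements lying above `b` in the natural preorder of a band form an upward closed
subsemigroup. Since `b` lies below `a`, it therefore lies below `a'`, `a''` and `a' * a''`, so that
`b * a' * a'' * b` collapses to `b` inside `(a * b * a') * (a'' * b * a''')`.
-/

/-- A band, i.e. a semigroup all of whose elements are idempotent; either operation of a skew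
lattice makes it a band. -/
class Band (S : Type*) extends Semigroup S where
  mul_self (x : S) : x * x = x

/-- The natural preorder of a band, written `y ⪰ x` on paper, which compares `D`-classes: Green's
relation `x D y` is `NaturalLE x y ∧ NaturalLE y x`. -/
def NaturalLE {S : Type*} [Mul S] (x y : S) : Prop := x * y * x = x

namespace NaturalLE

variable {S : Type*} [Band S] {x y z : S}

theorem mul_mul_le_middle (s x t : S) : NaturalLE (s * x * t) x := by
  set c := s * x * t with hc
  have absorb : s * x * c = c := by rw [hc, ← mul_assoc, Band.mul_self]
  have split : (c * s) * (x * c) = c := by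
    rw [mul_assoc, ← mul_assoc s, absorb, Band.mul_self]
  calc c * x * c = (c * s) * (x * c) * (x * c) := by rw [split, mul_assoc]
    _ = c := by rw [mul_assoc, Band.mul_self, split]

theorem mul_le_left (x y : S) : NaturalLE (x * y) x := by
  simpa only [Band.mul_self] using mul_mul_le_middle x x y

theorem trans (hxy : NaturalLE x y) (hyz : NaturalLE y z) : NaturalLE x z := by
  have factor : (x * y) * z * (y * x) = x :=
    calc (x * y) * z * (y * x) = x * (y * z * y) * x := by simp only [mul_assoc]
      _ = x := by rw [hyz, hxy]
  simpa only [factor] using mul_mul_le_middle (x * y) z (y * x)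

theorem le_mul (hxy : NaturalLE x y) (hxz : NaturalLE x z) : NaturalLE x (y * z) := by
  have hz : NaturalLE (x * y) z := (mul_le_left x y).trans hxz
  calc x * (y * z) * x = x * y * z * (x * y * x) := by rw [hxy, ← mul_assoc x y z]
    _ = (x * y * z * (x * y)) * x := by simp only [mul_assoc]
    _ = x := by rw [hz, hxy]

end NaturalLE

theorem coset_wedge_closed_general {S : Type*} [Band S] {b a' a'' : S} (a a''' : S)
    (hb₁ : NaturalLE b a') (hb₂ : NaturalLE b a'') :
    (a * b * a') * (a'' * b * a''') = a * b * a''' :=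
  calc (a * b * a') * (a'' * b * a''') = a * (b * (a' * a'') * b) * a''' := by
        simp only [mul_assoc]
    _ = a * b * a''' := by rw [hb₁.le_mul hb₂]

/-- Cosets of an upper D-class in a lower one are closed under ∧:
(a∧b∧a')∧(a''∧b∧a''') = a∧b∧a'''. -/
theorem coset_wedge_closed {S : Type*} (wedge vee : S → S → S)
    (wedge_idem : ∀ x : S, wedge x x = x)
    (vee_idem : ∀ x : S, vee x x = x)
    (wedge_assoc : ∀ x y z : S, wedge (wedge x y) z = wedge x (wedge y z))
    (vee_assoc : ∀ x y z : S, vee (vee x y) z = vee x (vee y z))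
    (abs₁ : ∀ x y : S, wedge x (vee x y) = x)
    (abs₂ : ∀ x y : S, wedge (vee y x) x = x)
    (abs₃ : ∀ x y : S, vee x (wedge x y) = x)
    (abs₄ : ∀ x y : S, vee (wedge y x) x = x)
    (a a' a'' a''' b : S)
    (hD₁ : wedge (wedge a a') a = a ∧ wedge (wedge a' a) a' = a')
    (hD₂ : wedge (wedge a a'') a = a ∧ wedge (wedge a'' a) a'' = a'')
    (hD₃ : wedge (wedge a a''') a = a ∧ wedge (wedge a''' a) a''' = a''')
    (hD₄ : wedge (wedge a' a'') a' = a' ∧ wedge (wedge a'' a') a'' = a'')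
    (hD₅ : wedge (wedge a' a''') a' = a' ∧ wedge (wedge a''' a') a''' = a''')
    (hD₆ : wedge (wedge a'' a''') a'' = a'' ∧ wedge (wedge a''' a'') a''' = a''')
    (hb : wedge (wedge b a) b = b) :
    wedge (wedge (wedge a b) a') (wedge (wedge a'' b) a''') = wedge (wedge a b) a''' := by
  let _ : Band S := { mul := wedge, mul_assoc := wedge_assoc, mul_self := wedge_idem }
  have hba : NaturalLE b a := hb
  exact coset_wedge_closed_general a a''' (hba.trans hD₁.1) (hba.trans hD₂.1)
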